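/- Let Q be an extended Dynkin quiver with minimal positive imaginary root δ and let λ ∈ K^I satisfy λ·δ = 0. Then for any m ≥ 1, every decomposition of mδ as a sum of elements of Σ_λ is a refinement of the decomposition mδ = δ + … + δ (m terms): if α^(1), …, α^(q) ∈ Σ_λ with Σ_{t=1}^q α^(t) = mδ, then there is a partition {1,…,q} = P_1 ∪ … ∪ P_m into disjoint subsets with Σ_{t∈P_s} α^(t) = δ for each s. -/

import Mathlib

open scoped BigOperators

noncomputable section

/-- A quiver with a finite vertex set `I` and a finite arrow set `A`;
`h a` and `t a` are the head and the tail of the arrow `a`. -/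
structure FinQuiver where
  I : Type
  [fintypeI : Fintype I]
  [decEqI : DecidableEq I]
  A : Type
  [fintypeA : Fintype A]
  h : A → I
  t : A → I

attribute [instance] FinQuiver.fintypeI FinQuiver.decEqI FinQuiver.fintypeA

namespace FinQuiver

variable (Q : FinQuiver)

/-- Arrows of the double quiver `Q̄` : every arrow `a : i → j` of `Q` (as `Sum.inl a`)
together with a reverse arrow `a* : j → i` (as `Sum.inr a`). -/
@[reducible] def DA : Type := Q.A ⊕ Q.A

instance : Fintype Q.DA := inferInstanceAs (Fintype (Q.A ⊕ Q.A))

/-- Head of an arrow of the double quiver. -/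
@[reducible] def dh : Q.DA → Q.I := fun a => match a with
  | Sum.inl a => Q.h a
  | Sum.inr a => Q.t a

/-- Tail of an arrow of the double quiver. -/
@[reducible] def dt : Q.DA → Q.I := fun a => match a with
  | Sum.inl a => Q.t a
  | Sum.inr a => Q.h a

/-- The symmetric bilinear form
`(α,β) = ∑_{i∈I} 2 α_i β_i − ∑_{a∈Q̄} α_{h(a)} β_{t(a)}` on `ℤ^I`. -/
def bil (α β : Q.I → ℤ) : ℤ :=
  (∑ i, 2 * α i * β i) - ∑ a : Q.DA, α (Q.dh a) * β (Q.dt a)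

/-- `p(α) = 1 − q(α) = 1 − α·α + ∑_{a ∈ Q} α_{t(a)} α_{h(a)}`. -/
def pp (α : Q.I → ℤ) : ℤ :=
  1 - (∑ i, α i * α i) + ∑ a : Q.A, α (Q.t a) * α (Q.h a)

/-- The coordinate vector `ε_i` at a vertex `i`. -/
def ev (i : Q.I) : Q.I → ℤ := fun j => if j = i then 1 else 0

/-- The coordinate vector of a vertex, as a vector of natural numbers. -/
def evN (i : Q.I) : Q.I → ℕ := fun j => if j = i then 1 else 0

/-- A vertex is loopfree if no arrow has both its head and its tail there. -/
def Loopfree (i : Q.I) : Prop := ∀ a : Q.A, ¬ (Q.h a = i ∧ Q.t a = i)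

/-- The reflection `s_i(α) = α − (α,ε_i) ε_i` at a (loopfree) vertex `i`. -/
def refl (i : Q.I) (α : Q.I → ℤ) : Q.I → ℤ := α - Q.bil α (Q.ev i) • Q.ev i

/-- Two vertices are joined by some arrow. -/
def Adj (i j : Q.I) : Prop :=
  ∃ a : Q.A, (Q.h a = i ∧ Q.t a = j) ∨ (Q.h a = j ∧ Q.t a = i)

/-- The quiver is connected. -/
def Connected : Prop := ∀ i j : Q.I, Relation.ReflTransGen Q.Adj i j

/-- The support of the vector `α` is connected in `Q`. -/
def SuppConnected (α : Q.I → ℤ) : Prop :=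
  ∀ i j : Q.I, α i ≠ 0 → α j ≠ 0 →
    Relation.ReflTransGen (fun x y => α x ≠ 0 ∧ α y ≠ 0 ∧ Q.Adj x y) i j

/-- The fundamental region: nonzero nonnegative vectors with connected support
such that `(α, ε_i) ≤ 0` for every vertex `i`. -/
def InFund (α : Q.I → ℤ) : Prop :=
  α ≠ 0 ∧ (∀ i, 0 ≤ α i) ∧ Q.SuppConnected α ∧ ∀ i, Q.bil α (Q.ev i) ≤ 0

/-- The roots of the Kac root system attached to `Q` : the real roots form the orbit
of the simple roots (coordinate vectors at loopfree vertices) under the reflections at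
loopfree vertices, and the imaginary roots form the orbit of `±(fundamental region)`
under these reflections. -/
inductive IsRoot : (Q.I → ℤ) → Prop
  | simple (i : Q.I) (hi : Q.Loopfree i) : IsRoot (Q.ev i)
  | fund (α : Q.I → ℤ) (hα : Q.InFund α) : IsRoot α
  | neg_fund (α : Q.I → ℤ) (hα : Q.InFund α) : IsRoot (-α)
  | reflect (i : Q.I) (hi : Q.Loopfree i) (α : Q.I → ℤ) (hα : IsRoot α) :
      IsRoot (Q.refl i α)

/-- Positive roots: roots all of whose components are nonnegative. -/
def IsPosRoot (α : Q.I → ℤ) : Prop := Q.IsRoot α ∧ (∀ i, 0 ≤ α i) ∧ α ≠ 0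

/-- The Tits form is positive semidefinite. -/
def PosSemidef : Prop := ∀ α : Q.I → ℤ, 0 ≤ Q.bil α α

/-- The Tits form is positive definite. -/
def PosDef : Prop := Q.PosSemidef ∧ ∀ α : Q.I → ℤ, Q.bil α α = 0 → α = 0

/-- Dynkin quivers: connected, with positive definite Tits form. -/
def IsDynkin : Prop := Q.Connected ∧ Q.PosDef

/-- Extended Dynkin quivers: connected, with positive semidefinite but not
positive definite Tits form. -/
def IsExtDynkin : Prop := Q.Connected ∧ Q.PosSemidef ∧ ¬ Q.PosDef

/-- `δ` is the minimal positive imaginary root of an extended Dynkin quiver: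
the minimal nonzero nonnegative vector in the radical of the Tits form. -/
def IsMinImag (δ : Q.I → ℤ) : Prop :=
  (∀ i, 0 ≤ δ i) ∧ δ ≠ 0 ∧ (∀ i, Q.bil δ (Q.ev i) = 0) ∧
    ∀ β : Q.I → ℤ, (∀ i, 0 ≤ β i) → β ≠ 0 → (∀ i, Q.bil β (Q.ev i) = 0) →
      ∀ i, δ i ≤ β i

/-- The subquiver of `Q` on a subset `S` of vertices and a subset `B` of arrows. -/
def restrict (S : Set Q.I) (B : Set Q.A) (hh : ∀ a ∈ B, Q.h a ∈ S)
    (ht : ∀ a ∈ B, Q.t a ∈ S) : FinQuiver :=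
  { I := S
    fintypeI := Fintype.ofFinite S
    decEqI := Classical.decEq _
    A := B
    fintypeA := Fintype.ofFinite B
    h := fun a => ⟨Q.h a.1, hh a.1 a.2⟩
    t := fun a => ⟨Q.t a.1, ht a.1 a.2⟩ }

/-- The support quiver of a vector: the full subquiver on the support of `β`. -/
def suppQuiver (β : Q.I → ℤ) : FinQuiver :=
  Q.restrict {i | β i ≠ 0} {a | β (Q.h a) ≠ 0 ∧ β (Q.t a) ≠ 0}
    (fun _ ha => ha.1) (fun _ ha => ha.2)

/-- A dimension vector (of natural numbers), viewed in `ℤ^I`. -/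
def toZ (α : Q.I → ℕ) : Q.I → ℤ := fun i => (α i : ℤ)

/-- An oriented cycle in the double quiver `Q̄`, consisting of `n+1` arrows,
the tail of each arrow being the head of the (cyclically) next one. -/
structure Cyc (Q' : FinQuiver) where
  n : ℕ
  ar : Fin (n + 1) → Q'.DA
  compat : ∀ i : Fin (n + 1), Q'.dt (ar i) = Q'.dh (ar (i + 1))

section WithField

variable (K : Type) [Field K]

/-- `λ·α = ∑_i λ_i α_i`. -/
def pair (l : Q.I → K) (α : Q.I → ℤ) : K := ∑ i, l i * (α i : K)

/-- `R_λ^+`, the set of positive roots `α` with `λ·α = 0`. -/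
def Rplus (l : Q.I → K) : Set (Q.I → ℤ) :=
  {α | Q.IsPosRoot α ∧ Q.pair K l α = 0}

/-- `ℕ R_λ^+`, the set of sums (including the empty sum `0`) of elements of `R_λ^+`. -/
def NRplus (l : Q.I → K) : Set (Q.I → ℤ) :=
  (AddSubmonoid.closure (Q.Rplus K l) : AddSubmonoid (Q.I → ℤ))

/-- `Σ_λ` : the elements `α ∈ R_λ^+` with `p(α) > ∑ p(β⁽ᵗ⁾)` for every decomposition
of `α` as a sum of at least two elements `β⁽ᵗ⁾` of `R_λ^+`. -/
def SigmaSet (l : Q.I → K) : Set (Q.I → ℤ) :=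
  {α | α ∈ Q.Rplus K l ∧
    ∀ (n : ℕ) (β : Fin n → (Q.I → ℤ)), 2 ≤ n → (∀ j, β j ∈ Q.Rplus K l) →
      α = ∑ j, β j → (∑ j, Q.pp (β j)) < Q.pp α}

/-- The dual reflection `r_i(λ)_j = λ_j − (ε_i,ε_j) λ_i`. -/
def coRefl (i : Q.I) (l : Q.I → K) : Q.I → K :=
  fun j => l j - (Q.bil (Q.ev i) (Q.ev j) : ℤ) * l i

/-- A single admissible reflection applied to the pair `(λ, α)`:
a reflection at a loopfree vertex `i` with `λ_i ≠ 0`. -/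
def AdmStep (x y : (Q.I → K) × (Q.I → ℤ)) : Prop :=
  ∃ i : Q.I, Q.Loopfree i ∧ x.1 i ≠ 0 ∧ y.1 = Q.coRefl K i x.1 ∧ y.2 = Q.refl i x.2

/-- `(ν,β)` is obtained from `(λ,α)` by a sequence of admissible reflections:
the two pairs lie in the same class of the equivalence relation generated by
admissible reflections. -/
def AdmEquiv (x y : (Q.I → K) × (Q.I → ℤ)) : Prop :=
  Relation.EqvGen (Q.AdmStep K) x y

/-- The space `Rep(Q̄,α)` of representations of the double quiver. -/
def Rep (α : Q.I → ℕ) : Type :=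
  ∀ a : Q.DA, Matrix (Fin (α (Q.dh a))) (Fin (α (Q.dt a))) K

/-- The moment map
`μ_α(x)_i = ∑_{a∈Q, h(a)=i} x_a x_{a*} − ∑_{a∈Q, t(a)=i} x_{a*} x_a`. -/
def moment (α : Q.I → ℕ) (x : Q.Rep K α) (i : Q.I) :
    Matrix (Fin (α i)) (Fin (α i)) K :=
  (∑ a : Q.A, if h : Q.h a = i then
      (x (Sum.inl a) * x (Sum.inr a)).submatrix
        (Fin.cast (congrArg α h).symm) (Fin.cast (congrArg α h).symm)
    else 0)
  - ∑ a : Q.A, if h : Q.t a = i then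
      (x (Sum.inr a) * x (Sum.inl a)).submatrix
        (Fin.cast (congrArg α h).symm) (Fin.cast (congrArg α h).symm)
    else 0

/-- The fibre `μ_α^{-1}(λ)` of the moment map over (the central element
corresponding to) `λ`. -/
def MomentFiber (l : Q.I → K) (α : Q.I → ℕ) : Set (Q.Rep K α) :=
  {x | ∀ i : Q.I, Q.moment K α x i = l i • (1 : Matrix (Fin (α i)) (Fin (α i)) K)}

/-- The group `∏_i GL(α_i,K)`; it acts on `Rep(Q̄,α)` by conjugation, with the same
orbits and the same invariant functions as `G(α) = (∏_i GL(α_i,K))/K^*`. -/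
def Gl (α : Q.I → ℕ) : Type := ∀ i : Q.I, Matrix.GeneralLinearGroup (Fin (α i)) K

/-- The conjugation action of `∏_i GL(α_i,K)` on `Rep(Q̄,α)`. -/
def glAct (α : Q.I → ℕ) (g : Q.Gl K α) (x : Q.Rep K α) : Q.Rep K α :=
  fun a => (g (Q.dh a) : Matrix (Fin (α (Q.dh a))) (Fin (α (Q.dh a))) K) * x a *
    (((g (Q.dt a))⁻¹ : Matrix.GeneralLinearGroup (Fin (α (Q.dt a))) K) :
      Matrix (Fin (α (Q.dt a))) (Fin (α (Q.dt a))) K)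

/-- Coordinates on `Rep(Q̄,α)`: matrix entries. -/
def Coords (α : Q.I → ℕ) : Type :=
  Σ a : Q.DA, Fin (α (Q.dh a)) × Fin (α (Q.dt a))

/-- The coordinate ring `K[V]` of a subset `V` of `Rep(Q̄,α)` : the algebra of
`K`-valued functions on `V` which are restrictions of polynomial functions. -/
def fnRing (α : Q.I → ℕ) (V : Set (Q.Rep K α)) : Subalgebra K (↥V → K) :=
  (MvPolynomial.aeval
    (fun c : Q.Coords α => fun v : ↥V => v.1 c.1 c.2.1 c.2.2) :
    MvPolynomial (Q.Coords α) K →ₐ[K] (↥V → K)).range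

end WithField

end FinQuiver

/-- The subalgebra of functions invariant under a relation (e.g. the orbit
relation of a group action). -/
def relInv (K : Type) [Field K] {V : Type} (R : V → V → Prop) :
    Subalgebra K (V → K) where
  carrier := {f | ∀ x y : V, R x y → f x = f y}
  mul_mem' := by
    intro f g hf hg x y hxy
    simp only [Pi.mul_apply, hf x y hxy, hg x y hxy]
  one_mem' := fun x y _ => rfl
  add_mem' := by
    intro f g hf hg x y hxy
    simp only [Pi.add_apply, hf x y hxy, hg x y hxy]
  zero_mem' := fun x y _ => rfl
  algebraMap_mem' := fun c x y _ => rfl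

namespace FinQuiver

variable (Q : FinQuiver) (K : Type) [Field K]

/-- The coordinate ring of the Marsden–Weinstein reduction
`N(λ,α) = μ_α^{-1}(λ) ⫽ G(α)` : the `G(α)`-invariant functions in the coordinate
ring of `μ_α^{-1}(λ)`.  Two such reductions are isomorphic as (affine) varieties
exactly when these `K`-algebras are isomorphic. -/
def InvRing (l : Q.I → K) (α : Q.I → ℕ) :
    Subalgebra K (↥(Q.MomentFiber K l α) → K) :=
  Q.fnRing K α (Q.MomentFiber K l α) ⊓
    relInv K (fun x y : ↥(Q.MomentFiber K l α) =>
      ∃ g : Q.Gl K α, y.1 = Q.glAct K α g x.1)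

/-- Index type for a product `∏_t X_t^{m_t}`. -/
@[reducible] def SymIdx (s : ℕ) (m : Fin s → ℕ) : Type := Σ t : Fin s, Fin (m t)

/-- The product `∏_{t} Rep(Q̄, d_t)^{m_t}` of representation spaces. -/
def SymRep (s : ℕ) (m : Fin s → ℕ) (d : Fin s → (Q.I → ℕ)) : Type :=
  ∀ p : SymIdx s m, Q.Rep K (d p.1)

/-- The product `∏_t μ_{d_t}^{-1}(λ)^{m_t}` of moment map fibres. -/
def SymFiber (s : ℕ) (m : Fin s → ℕ) (d : Fin s → (Q.I → ℕ)) (l : Q.I → K) :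
    Set (Q.SymRep K s m d) :=
  {x | ∀ p : SymIdx s m, x p ∈ Q.MomentFiber K l (d p.1)}

/-- Polynomial functions on the product of fibres. -/
def symFnRing (s : ℕ) (m : Fin s → ℕ) (d : Fin s → (Q.I → ℕ)) (l : Q.I → K) :
    Subalgebra K (↥(Q.SymFiber K s m d l) → K) :=
  (MvPolynomial.aeval
    (fun c : Σ p : SymIdx s m, Q.Coords (d p.1) =>
      fun v : ↥(Q.SymFiber K s m d l) => v.1 c.1 c.2.1 c.2.2.1 c.2.2.2) :
    MvPolynomial (Σ p : SymIdx s m, Q.Coords (d p.1)) K →ₐ[K]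
      (↥(Q.SymFiber K s m d l) → K)).range

/-- The componentwise action of the product of the groups `∏ GL(d_t)^{m_t}`. -/
def symGlAct (s : ℕ) (m : Fin s → ℕ) (d : Fin s → (Q.I → ℕ))
    (g : ∀ p : SymIdx s m, Q.Gl K (d p.1)) (x : Q.SymRep K s m d) :
    Q.SymRep K s m d :=
  fun p => Q.glAct K (d p.1) (g p) (x p)

/-- The action of `∏_t S_{m_t}` permuting the factors of each `X_t^{m_t}`. -/
def symPermAct (s : ℕ) (m : Fin s → ℕ) (d : Fin s → (Q.I → ℕ))
    (π : ∀ t : Fin s, Equiv.Perm (Fin (m t))) (x : Q.SymRep K s m d) :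
    Q.SymRep K s m d :=
  fun p => x ⟨p.1, π p.1 p.2⟩

/-- The coordinate ring of the product of symmetric products
`∏_t S^{m_t} N(λ, d_t)` of Marsden–Weinstein reductions: functions on
`∏_t μ_{d_t}^{-1}(λ)^{m_t}` which are polynomial, invariant under all the groups
`G(d_t)` acting on the separate factors, and symmetric under permutations of the
`m_t` factors of each type `t`. -/
def SymInvRing (s : ℕ) (m : Fin s → ℕ) (d : Fin s → (Q.I → ℕ)) (l : Q.I → K) :
    Subalgebra K (↥(Q.SymFiber K s m d l) → K) :=
  Q.symFnRing K s m d l ⊓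
    relInv K (fun x y : ↥(Q.SymFiber K s m d l) =>
      ∃ g : ∀ p : SymIdx s m, Q.Gl K (d p.1), y.1 = Q.symGlAct K s m d g x.1) ⊓
    relInv K (fun x y : ↥(Q.SymFiber K s m d l) =>
      ∃ π : ∀ t : Fin s, Equiv.Perm (Fin (m t)), y.1 = Q.symPermAct K s m d π x.1)

/-- The trace function `tr_p` of an oriented cycle `p` in `Q̄` :
`tr_p(x) = tr(x_{a_1} ⋯ x_{a_ℓ})`, written out via matrix entries. -/
def cycTr (α : Q.I → ℕ) (p : Q.Cyc) (x : Q.Rep K α) : K :=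
  ∑ c : ∀ i : Fin (p.n + 1), Fin (α (Q.dh (p.ar i))),
    ∏ i : Fin (p.n + 1),
      x (p.ar i) (c i) (Fin.cast (congrArg α (p.compat i)).symm (c (i + 1)))

/-- `U` is a subrepresentation of the `Π^λ`-module given by the point
`x ∈ Rep(Q̄,α)` : a collection of subspaces stable under all the maps `x_a`. -/
def SubRep (α : Q.I → ℕ) (x : Q.Rep K α)
    (U : ∀ i : Q.I, Submodule K (Fin (α i) → K)) : Prop :=
  ∀ a : Q.DA, ∀ v ∈ U (Q.dt a), (x a).mulVec v ∈ U (Q.dh a)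

/-- The module given by `x` has the simple module `S_{i₀}` (dimension vector
`ε_{i₀}`, all arrows acting as zero) as a composition factor: it has a subquotient
of dimension vector `ε_{i₀}` on which all arrows act as zero. -/
def HasSFactor (α : Q.I → ℕ) (i0 : Q.I) (x : Q.Rep K α) : Prop :=
  ∃ U W : ∀ i : Q.I, Submodule K (Fin (α i) → K),
    Q.SubRep K α x U ∧ Q.SubRep K α x W ∧ (∀ i, U i ≤ W i) ∧
    (∀ i, Module.finrank K (W i) =
      Module.finrank K (U i) + (if i = i0 then 1 else 0)) ∧
    (∀ a : Q.DA, Q.dh a = i0 → Q.dt a = i0 →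
      ∀ v ∈ W (Q.dt a), (x a).mulVec v ∈ U (Q.dh a))

/-- `W/U` is a simple subquotient of the module given by `x`; the simple
subquotients of a module are, up to isomorphism, exactly its composition factors. -/
def SimpleSubquot (α : Q.I → ℕ) (x : Q.Rep K α)
    (U W : ∀ i : Q.I, Submodule K (Fin (α i) → K)) : Prop :=
  Q.SubRep K α x U ∧ Q.SubRep K α x W ∧ (∀ i, U i ≤ W i) ∧ U ≠ W ∧
    ∀ V : ∀ i : Q.I, Submodule K (Fin (α i) → K),
      Q.SubRep K α x V → (∀ i, U i ≤ V i) → (∀ i, V i ≤ W i) → V = U ∨ V = W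

/-- The direct sum map `∏_{j=1}^m Rep(Q̄,δ) → Rep(Q̄,mδ)` (block diagonal). -/
def dsMap (δ : Q.I → ℕ) (m : ℕ) (y : Fin m → Q.Rep K δ) :
    Q.Rep K (fun i => m * δ i) :=
  fun a => Matrix.of fun r c =>
    if (finProdFinEquiv.symm r).1 = (finProdFinEquiv.symm c).1 then
      y (finProdFinEquiv.symm r).1 a (finProdFinEquiv.symm r).2
        (finProdFinEquiv.symm c).2
    else 0

end FinQuiver

/-!
For a connected quiver with positive semidefinite Tits form, the positive roots are the vectors
`x > 0` with `p(x) ≥ 0`, and this condition does not change when a radical vector such as `δ` is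
subtracted. Hence an element of `Σ_λ` not below `δ` would split off a copy of `δ` inside `R_λ^+`,
which the inequality defining `Σ_λ` forbids.

Given `∑ α⁽ᵗ⁾ = mδ`, take a maximal nonempty partial sum `β ∈ R_λ^+` with `β ≤ δ`. If
`(β, β) > 0`, then `(β, mδ) = 0` makes some unused `α⁽ᵗ⁾` satisfy `(β, α⁽ᵗ⁾) < 0`. Then
`β + α⁽ᵗ⁾ ∈ R_λ^+`, and `β + α⁽ᵗ⁾ ≤ δ` because otherwise `α⁽ᵗ⁾` would be the sum of
`β + α⁽ᵗ⁾ - δ` and `δ - β`, both in `R_λ^+`. This contradicts maximality, so `β` is in the radical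
and equals `δ` by minimality. Removing this copy of `δ` and repeating proves the theorem.
-/

section Finpartition

variable {ι : Type*} [DecidableEq ι]

lemma sum_finpartition_parts {M : Type*} [AddCommMonoid M] {s : Finset ι} (P : Finpartition s)
    (f : ι → M) : ∑ S ∈ P.parts, ∑ t ∈ S, f t = ∑ t ∈ s, f t :=
  (Finset.sum_biUnion P.disjoint).symm.trans (congrArg (∑ t ∈ ·, f t) P.biUnion_parts)

lemma exists_fiber_mem_parts [Fintype ι] {m : ℕ} (P : Finpartition (Finset.univ : Finset ι))
    (hm : P.parts.card = m) :
    ∃ f : ι → Fin m, ∀ s, Finset.univ.filter (f · = s) ∈ P.parts := by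
  let e := P.parts.equivFinOfCardEq hm
  refine ⟨fun t => e ⟨P.part t, P.part_mem.2 (Finset.mem_univ t)⟩, fun s => ?_⟩
  convert (e.symm s).2
  ext t
  simp [← Equiv.eq_symm_apply, Subtype.ext_iff, P.part_eq_iff_mem (e.symm s).2]

end Finpartition

namespace FinQuiver

section TitsForm

variable (Q : FinQuiver)

/-- The symmetric bilinear form `(·,·)` of `Q` as a Mathlib bilinear form. Its kernel is the
radical of the Tits form. -/
def bilForm : LinearMap.BilinForm ℤ (Q.I → ℤ) :=
  LinearMap.mk₂ ℤ Q.bil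
    (fun x y z => by
      simp only [bil, Pi.add_apply, mul_add, add_mul, Finset.sum_add_distrib]; ring)
    (fun c x y => by
      simp only [bil, Pi.smul_apply, smul_eq_mul, mul_sub, Finset.mul_sum]
      congr! 2 <;> ring)
    (fun x y z => by
      simp only [bil, Pi.add_apply, mul_add, Finset.sum_add_distrib]; ring)
    (fun c x y => by
      simp only [bil, Pi.smul_apply, smul_eq_mul, mul_sub, Finset.mul_sum]
      congr! 2 <;> ring)

lemma bilForm_apply (x y : Q.I → ℤ) : Q.bilForm x y = Q.bil x y := rfl

lemma bilForm_comm (x y : Q.I → ℤ) : Q.bilForm x y = Q.bilForm y x := by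
  simp only [bilForm_apply, bil, Fintype.sum_sum_type, mul_assoc, mul_comm (y _)]
  ring

lemma isSymm_bilForm : LinearMap.IsSymm Q.bilForm := ⟨Q.bilForm_comm⟩

lemma bilForm_ev (x : Q.I → ℤ) (i : Q.I) :
    Q.bilForm x (Q.ev i) = 2 * x i - ∑ a : Q.DA with Q.dt a = i, x (Q.dh a) := by
  simp only [bilForm_apply, bil, ev, mul_ite, mul_one, mul_zero, Finset.sum_ite_eq',
    Finset.mem_univ, if_true, Finset.sum_filter]

lemma bilForm_eq_sum_mul_ev (x y : Q.I → ℤ) :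
    Q.bilForm x y = ∑ i, y i * Q.bilForm x (Q.ev i) := by
  have hev (i : Q.I) : Q.ev i = fun j => if i = j then 1 else 0 := by
    funext j
    simp only [ev, eq_comm (a := j)]
  simpa only [hev, smul_eq_mul] using (Q.bilForm x).pi_apply_eq_sum_univ y

lemma bilForm_self (x : Q.I → ℤ) : Q.bilForm x x = 2 * (1 - Q.pp x) := by
  simp only [bilForm_apply, bil, pp, Fintype.sum_sum_type, mul_comm (x (Q.h _)), mul_assoc,
    ← Finset.mul_sum]
  ring

lemma pp_add (x y : Q.I → ℤ) : Q.pp (x + y) = Q.pp x + Q.pp y - 1 - Q.bilForm x y := by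
  have h := Q.bilForm_self (x + y)
  rw [map_add, map_add, LinearMap.add_apply, LinearMap.add_apply, Q.bilForm_comm y x, bilForm_self,
    bilForm_self] at h
  linarith

lemma pp_neg (x : Q.I → ℤ) : Q.pp (-x) = Q.pp x := by simp [pp]

lemma pp_ev (i : Q.I) : Q.pp (Q.ev i) = Finset.card {a | Q.t a = i ∧ Q.h a = i} := by
  simp [pp, ev, ← ite_and, and_comm]

variable {Q}

lemma mem_ker_bilForm {x : Q.I → ℤ} :
    x ∈ LinearMap.ker Q.bilForm ↔ ∀ i, Q.bilForm x (Q.ev i) = 0 := by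
  refine ⟨fun hx i => by rw [LinearMap.mem_ker.1 hx, LinearMap.zero_apply], fun hx => ?_⟩
  refine LinearMap.mem_ker.2 (LinearMap.ext fun y => ?_)
  simp [bilForm_eq_sum_mul_ev Q x y, hx]

lemma bilForm_apply_eq_zero_of_mem_ker {z : Q.I → ℤ} (hz : z ∈ LinearMap.ker Q.bilForm)
    (x : Q.I → ℤ) : Q.bilForm x z = 0 := by
  rw [bilForm_comm, LinearMap.mem_ker.1 hz, LinearMap.zero_apply]

lemma pp_add_of_mem_ker {z : Q.I → ℤ} (hz : z ∈ LinearMap.ker Q.bilForm) (x : Q.I → ℤ) :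
    Q.pp (x + z) = Q.pp x := by
  have hpz := Q.bilForm_self z
  rw [bilForm_apply_eq_zero_of_mem_ker hz] at hpz
  rw [pp_add, bilForm_apply_eq_zero_of_mem_ker hz]
  linarith

lemma pp_sub_of_mem_ker {z : Q.I → ℤ} (hz : z ∈ LinearMap.ker Q.bilForm) (x : Q.I → ℤ) :
    Q.pp (x - z) = Q.pp x := by
  simpa only [sub_eq_add_neg] using pp_add_of_mem_ker (neg_mem hz) x

lemma bilForm_nonpos_of_inf_eq_zero {x y : Q.I → ℤ} (hx : 0 ≤ x) (hy : 0 ≤ y)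
    (hxy : x ⊓ y = 0) : Q.bilForm x y ≤ 0 := by
  have hmul (i : Q.I) : x i * y i = 0 := by
    have hmin : min (x i) (y i) = 0 := congrFun hxy i
    rw [← min_mul_max, hmin, zero_mul]
  rw [bilForm_apply, bil, Finset.sum_eq_zero fun i _ => by rw [mul_assoc, hmul, mul_zero],
    zero_sub, neg_nonpos]
  exact Finset.sum_nonneg fun a _ => mul_nonneg (hx _) (hy _)

lemma one_le_pp_of_bilForm_ev_nonpos {x : Q.I → ℤ} (hx : 0 ≤ x)
    (h : ∀ i, Q.bilForm x (Q.ev i) ≤ 0) : 1 ≤ Q.pp x := by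
  have hself : Q.bilForm x x ≤ 0 := by
    rw [bilForm_eq_sum_mul_ev]
    exact Finset.sum_nonpos fun i _ => mul_nonpos_of_nonneg_of_nonpos (hx i) (h i)
  rw [bilForm_self] at hself
  linarith

end TitsForm

section Roots

variable {Q : FinQuiver} {i : Q.I}

lemma Loopfree.pp_ev_eq_zero (hi : Q.Loopfree i) : Q.pp (Q.ev i) = 0 := by
  rw [pp_ev, Nat.cast_eq_zero, Finset.card_eq_zero, Finset.filter_eq_empty_iff]
  exact fun a _ ha => hi a ha.symm

lemma one_le_pp_ev_of_not_loopfree (hi : ¬ Q.Loopfree i) : 1 ≤ Q.pp (Q.ev i) := by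
  simp only [Loopfree, not_forall, not_not] at hi
  obtain ⟨a, ha⟩ := hi
  rw [pp_ev]
  exact_mod_cast Finset.card_pos.2 ⟨a, by simpa using ha.symm⟩

lemma Loopfree.bilForm_ev_self (hi : Q.Loopfree i) : Q.bilForm (Q.ev i) (Q.ev i) = 2 := by
  rw [bilForm_self, hi.pp_ev_eq_zero, sub_zero, mul_one]

lemma refl_eq (i : Q.I) (x : Q.I → ℤ) :
    Q.refl i x = x - Q.bilForm x (Q.ev i) • Q.ev i := rfl

lemma Loopfree.refl_refl (hi : Q.Loopfree i) (x : Q.I → ℤ) : Q.refl i (Q.refl i x) = x := by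
  simp only [refl_eq, map_sub, map_smul, LinearMap.sub_apply, LinearMap.smul_apply,
    hi.bilForm_ev_self]
  module

lemma Loopfree.pp_refl (hi : Q.Loopfree i) (x : Q.I → ℤ) : Q.pp (Q.refl i x) = Q.pp x := by
  have h : Q.bilForm (Q.refl i x) (Q.refl i x) = Q.bilForm x x := by
    simp only [refl_eq, map_sub, map_smul, LinearMap.sub_apply, LinearMap.smul_apply,
      hi.bilForm_ev_self, Q.bilForm_comm (Q.ev i) x, smul_eq_mul]
    ring
  rw [bilForm_self, bilForm_self] at h
  linarith

lemma InFund.one_le_pp {x : Q.I → ℤ} (hx : Q.InFund x) : 1 ≤ Q.pp x :=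
  one_le_pp_of_bilForm_ev_nonpos hx.2.1 hx.2.2.2

lemma IsRoot.pp_nonneg {x : Q.I → ℤ} (hx : Q.IsRoot x) : 0 ≤ Q.pp x := by
  induction hx with
  | simple i hi => exact hi.pp_ev_eq_zero.ge
  | fund α hα => exact zero_le_one.trans hα.one_le_pp
  | neg_fund α hα => exact (zero_le_one.trans hα.one_le_pp).trans_eq (Q.pp_neg α).symm
  | reflect i hi α _ ih => rwa [hi.pp_refl]

end Roots

section Semidefinite

variable {Q : FinQuiver}

lemma PosSemidef.pp_le_one (hP : Q.PosSemidef) (x : Q.I → ℤ) : Q.pp x ≤ 1 := by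
  have h : 0 ≤ Q.bilForm x x := hP x
  rw [bilForm_self] at h
  linarith

lemma PosSemidef.mem_ker_bilForm_iff (hP : Q.PosSemidef) {x : Q.I → ℤ} :
    x ∈ LinearMap.ker Q.bilForm ↔ 1 ≤ Q.pp x := by
  rw [← Q.bilForm.apply_apply_same_eq_zero_iff hP Q.isSymm_bilForm, bilForm_self]
  have := hP.pp_le_one x
  omega

lemma PosSemidef.loopfree_of_bilForm_ev_ne_zero (hP : Q.PosSemidef) {x : Q.I → ℤ} {i : Q.I}
    (h : Q.bilForm x (Q.ev i) ≠ 0) : Q.Loopfree i := by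
  contrapose h
  exact bilForm_apply_eq_zero_of_mem_ker
    (hP.mem_ker_bilForm_iff.2 (one_le_pp_ev_of_not_loopfree h)) x

lemma eq_zero_of_adj_of_mem_ker {z : Q.I → ℤ} (hz : z ∈ LinearMap.ker Q.bilForm) (h0 : 0 ≤ z)
    {i j : Q.I} (hij : Q.Adj i j) (hi : z i = 0) : z j = 0 := by
  have hsum : ∑ a : Q.DA with Q.dt a = i, z (Q.dh a) = 0 := by
    have h := mem_ker_bilForm.1 hz i
    rw [bilForm_ev, hi] at h
    linarith
  have hzero := (Finset.sum_eq_zero_iff_of_nonneg fun a _ => h0 (Q.dh a)).1 hsum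
  obtain ⟨a, ⟨hh, ht⟩ | ⟨hh, ht⟩⟩ := hij
  · rw [← ht]
    exact hzero (Sum.inr a) (Finset.mem_filter.2 ⟨Finset.mem_univ _, hh⟩)
  · rw [← hh]
    exact hzero (Sum.inl a) (Finset.mem_filter.2 ⟨Finset.mem_univ _, ht⟩)

lemma Connected.pos_of_mem_ker (hC : Q.Connected) {z : Q.I → ℤ}
    (hz : z ∈ LinearMap.ker Q.bilForm) (h0 : 0 < z) (i : Q.I) : 0 < z i := by
  refine (h0.le i).lt_of_ne fun hi => h0.ne (funext fun j => Eq.symm ?_)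
  induction hC i j with
  | refl => exact hi.symm
  | tail _ hadj ih => exact eq_zero_of_adj_of_mem_ker hz h0.le hadj ih

lemma Connected.inFund_of_mem_ker (hC : Q.Connected) {z : Q.I → ℤ}
    (hz : z ∈ LinearMap.ker Q.bilForm) (h0 : 0 < z) : Q.InFund z := by
  have hpos := hC.pos_of_mem_ker hz h0
  refine ⟨h0.ne', h0.le, fun i j _ _ => ?_, fun i => (mem_ker_bilForm.1 hz i).le⟩
  exact Relation.ReflTransGen.mono (fun x y hxy => ⟨(hpos x).ne', (hpos y).ne', hxy⟩) _ _ (hC i j)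

lemma Connected.nonneg_or_nonpos_of_posPart_mem_ker (hC : Q.Connected) {x : Q.I → ℤ}
    (hx : x⁺ ∈ LinearMap.ker Q.bilForm) : 0 ≤ x ∨ x ≤ 0 := by
  rcases (posPart_nonneg x).eq_or_lt with h0 | hpos
  · exact Or.inr (posPart_eq_zero.1 h0.symm)
  · refine Or.inl fun i => ?_
    have hi : 0 < max (x i) 0 := hC.pos_of_mem_ker hx hpos i
    exact (lt_max_iff.1 hi).elim le_of_lt fun h => (lt_irrefl 0 h).elim

lemma nonneg_or_nonpos_of_pp_nonneg (hC : Q.Connected) (hP : Q.PosSemidef) {x : Q.I → ℤ}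
    (hx : 0 ≤ Q.pp x) : 0 ≤ x ∨ x ≤ 0 := by
  have hcross : Q.bilForm x⁺ x⁻ ≤ 0 :=
    bilForm_nonpos_of_inf_eq_zero (posPart_nonneg x) (negPart_nonneg x)
      (posPart_inf_negPart_eq_zero x)
  have hpp : Q.pp x = Q.pp x⁺ + Q.pp x⁻ - 1 + Q.bilForm x⁺ x⁻ := by
    conv_lhs => rw [← posPart_sub_negPart x, sub_eq_add_neg, pp_add, pp_neg, map_neg]
    ring
  -- Hence `p(x⁺) + p(x⁻) ≥ 1`, so by integrality one of the two parts is in the radical.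
  have hcases : 1 ≤ Q.pp x⁺ ∨ 1 ≤ Q.pp (-x)⁺ := by
    rw [posPart_neg]
    omega
  rcases hcases with h | h
  · exact hC.nonneg_or_nonpos_of_posPart_mem_ker (hP.mem_ker_bilForm_iff.2 h)
  · simpa only [neg_nonneg, neg_nonpos, or_comm] using
      hC.nonneg_or_nonpos_of_posPart_mem_ker (hP.mem_ker_bilForm_iff.2 h)

lemma Loopfree.eq_ev_of_refl_nonpos {i : Q.I} (hi : Q.Loopfree i) {x : Q.I → ℤ} (hx : 0 < x)
    (hp : 0 ≤ Q.pp x) (h : Q.refl i x ≤ 0) : x = Q.ev i := by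
  have hsupp : x = x i • Q.ev i := by
    funext j
    by_cases hj : j = i
    · simp [ev, hj]
    · have hle : x j ≤ 0 := by simpa [refl_eq, ev, hj] using h j
      simpa [ev, hj] using hle.antisymm (hx.le j)
  have hself := Q.bilForm_self x
  rw [hsupp] at hself hp
  simp only [map_smul, LinearMap.smul_apply, hi.bilForm_ev_self, smul_eq_mul] at hself
  have hne : x i ≠ 0 := fun h0 => hx.ne' (by rw [hsupp, h0, zero_smul])
  have hpos : 0 < x i := (hx.le i).lt_of_ne hne.symm
  have hone : x i = 1 := by nlinarith
  rw [hsupp, hone, one_smul]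

lemma sum_refl (i : Q.I) (x : Q.I → ℤ) :
    ∑ j, Q.refl i x j = ∑ j, x j - Q.bilForm x (Q.ev i) := by
  simp [refl_eq, ev]

lemma isRoot_of_pp_nonneg (hC : Q.Connected) (hP : Q.PosSemidef) {x : Q.I → ℤ} (hx : 0 < x)
    (hp : 0 ≤ Q.pp x) : Q.IsRoot x := by
  induction hn : (∑ j, x j).toNat using Nat.strong_induction_on generalizing x with
  | _ n ih =>
  by_cases hfund : ∀ i, Q.bilForm x (Q.ev i) ≤ 0
  · have hker := hP.mem_ker_bilForm_iff.2 (one_le_pp_of_bilForm_ev_nonpos hx.le hfund)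
    exact .fund x (hC.inFund_of_mem_ker hker hx)
  · obtain ⟨i, hi⟩ : ∃ i, 0 < Q.bilForm x (Q.ev i) := by simpa using hfund
    have hloop : Q.Loopfree i := hP.loopfree_of_bilForm_ev_ne_zero hi.ne'
    by_cases hneg : Q.refl i x ≤ 0
    · rw [hloop.eq_ev_of_refl_nonpos hx hp hneg]
      exact .simple i hloop
    · have hp' : 0 ≤ Q.pp (Q.refl i x) := by rwa [hloop.pp_refl]
      have hpos : 0 < Q.refl i x :=
        ⟨(nonneg_or_nonpos_of_pp_nonneg hC hP hp').resolve_right hneg, hneg⟩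
      have hheight : (∑ j, Q.refl i x j).toNat < n := by
        have h0 : 0 ≤ ∑ j, Q.refl i x j := Finset.sum_nonneg fun j _ => hpos.le j
        rw [sum_refl] at h0 ⊢
        omega
      rw [← hloop.refl_refl x]
      exact .reflect i hloop _ (ih _ hheight hpos hp' rfl)

lemma isPosRoot_iff (hC : Q.Connected) (hP : Q.PosSemidef) {x : Q.I → ℤ} :
    Q.IsPosRoot x ↔ 0 < x ∧ 0 ≤ Q.pp x :=
  ⟨fun ⟨hroot, h0, hne⟩ => ⟨lt_of_le_of_ne h0 hne.symm, hroot.pp_nonneg⟩,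
    fun ⟨hx, hp⟩ => ⟨isRoot_of_pp_nonneg hC hP hx hp, hx.le, hx.ne'⟩⟩

end Semidefinite

section Sigma

variable {Q : FinQuiver} {K : Type} [Field K] {l : Q.I → K}

lemma pair_add (x y : Q.I → ℤ) : Q.pair K l (x + y) = Q.pair K l x + Q.pair K l y := by
  simp [pair, mul_add, Finset.sum_add_distrib]

lemma pair_sub (x y : Q.I → ℤ) : Q.pair K l (x - y) = Q.pair K l x - Q.pair K l y := by
  simp [pair, mul_sub]

lemma mem_Rplus_iff (hC : Q.Connected) (hP : Q.PosSemidef) {x : Q.I → ℤ} :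
    x ∈ Q.Rplus K l ↔ (0 < x ∧ 0 ≤ Q.pp x) ∧ Q.pair K l x = 0 := by
  rw [← isPosRoot_iff hC hP]
  rfl

lemma pp_add_pp_lt_of_add_mem_SigmaSet {x y : Q.I → ℤ} (hxy : x + y ∈ Q.SigmaSet K l)
    (hx : x ∈ Q.Rplus K l) (hy : y ∈ Q.Rplus K l) : Q.pp x + Q.pp y < Q.pp (x + y) := by
  simpa [Fin.sum_univ_two] using
    hxy.2 2 ![x, y] le_rfl (Fin.forall_fin_two.2 ⟨hx, hy⟩) (by simp [Fin.sum_univ_two])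

lemma sub_mem_Rplus_of_not_le (hC : Q.Connected) (hP : Q.PosSemidef) {x z : Q.I → ℤ}
    (hz : z ∈ LinearMap.ker Q.bilForm) (hzR : z ∈ Q.Rplus K l) (hx : x ∈ Q.Rplus K l)
    (hxz : ¬ x ≤ z) : x - z ∈ Q.Rplus K l := by
  have hp : 0 ≤ Q.pp (x - z) := by
    rw [pp_sub_of_mem_ker hz]
    exact hx.1.1.pp_nonneg
  have hneg : ¬ x - z ≤ 0 := fun h => hxz (sub_nonpos.1 h)
  have hnonneg : 0 ≤ x - z := (nonneg_or_nonpos_of_pp_nonneg hC hP hp).resolve_right hneg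
  exact (mem_Rplus_iff hC hP).2
    ⟨⟨⟨hnonneg, hneg⟩, hp⟩, by rw [pair_sub, hx.2, hzR.2, sub_zero]⟩

lemma sub_mem_Rplus_of_lt (hC : Q.Connected) (hP : Q.PosSemidef) {x z : Q.I → ℤ}
    (hz : z ∈ LinearMap.ker Q.bilForm) (hzR : z ∈ Q.Rplus K l) (hx : x ∈ Q.Rplus K l)
    (hxz : x < z) : z - x ∈ Q.Rplus K l := by
  have hp : 0 ≤ Q.pp (z - x) := by
    rw [← neg_sub, pp_neg, pp_sub_of_mem_ker hz]
    exact hx.1.1.pp_nonneg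
  exact (mem_Rplus_iff hC hP).2
    ⟨⟨sub_pos.2 hxz, hp⟩, by rw [pair_sub, hx.2, hzR.2, sub_zero]⟩

lemma le_of_mem_SigmaSet (hC : Q.Connected) (hP : Q.PosSemidef) {x z : Q.I → ℤ}
    (hz : z ∈ LinearMap.ker Q.bilForm) (hzR : z ∈ Q.Rplus K l) (hx : x ∈ Q.SigmaSet K l) :
    x ≤ z := by
  by_contra hxz
  have hlt := pp_add_pp_lt_of_add_mem_SigmaSet (by rwa [sub_add_cancel])
    (sub_mem_Rplus_of_not_le hC hP hz hzR hx.1 hxz) hzR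
  rw [sub_add_cancel, pp_sub_of_mem_ker hz] at hlt
  linarith [hzR.1.1.pp_nonneg]

lemma add_mem_Rplus_of_bilForm_neg (hC : Q.Connected) (hP : Q.PosSemidef) {x y : Q.I → ℤ}
    (hx : x ∈ Q.Rplus K l) (hy : y ∈ Q.Rplus K l) (hxy : Q.bilForm x y < 0) :
    x + y ∈ Q.Rplus K l := by
  rw [mem_Rplus_iff hC hP] at hx hy ⊢
  refine ⟨⟨add_pos hx.1.1 hy.1.1, ?_⟩, by rw [pair_add, hx.2, hy.2, add_zero]⟩
  rw [pp_add]
  linarith [hx.1.2, hy.1.2]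

lemma add_le_of_bilForm_neg (hC : Q.Connected) (hP : Q.PosSemidef) {x y z : Q.I → ℤ}
    (hz : z ∈ LinearMap.ker Q.bilForm) (hzR : z ∈ Q.Rplus K l) (hx : x ∈ Q.Rplus K l)
    (hxz : x ≤ z) (hy : y ∈ Q.SigmaSet K l) (hxy : Q.bilForm x y < 0) : x + y ≤ z := by
  have hyker : y ∉ LinearMap.ker Q.bilForm := fun h =>
    hxy.ne (bilForm_apply_eq_zero_of_mem_ker h x)
  have hxne : x ≠ z := by
    rintro rfl
    exact hxy.ne (by rw [LinearMap.mem_ker.1 hz, LinearMap.zero_apply])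
  have hsumR := add_mem_Rplus_of_bilForm_neg hC hP hx hy.1 hxy
  by_contra hle
  -- Otherwise `y = (x + y - z) + (z - x)` would split `y` into two elements of `R_λ^+`.
  have hsubR₁ := sub_mem_Rplus_of_not_le hC hP hz hzR hsumR hle
  have hsubR₂ := sub_mem_Rplus_of_lt hC hP hz hzR hx (hxz.lt_of_ne hxne)
  have hsplit : x + y - z + (z - x) = y := by abel
  have hlt := pp_add_pp_lt_of_add_mem_SigmaSet (by rwa [hsplit]) hsubR₁ hsubR₂
  rw [hsplit] at hlt
  rw [hP.mem_ker_bilForm_iff] at hyker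
  linarith [hsubR₁.1.1.pp_nonneg, hsubR₂.1.1.pp_nonneg]

end Sigma

section Decomposition

variable {Q : FinQuiver} {δ : Q.I → ℤ}

lemma IsMinImag.isLeast (hδ : Q.IsMinImag δ) :
    IsLeast {z | z ∈ LinearMap.ker Q.bilForm ∧ 0 < z} δ := by
  obtain ⟨h0, hne, hrad, hmin⟩ := hδ
  exact ⟨⟨mem_ker_bilForm.2 hrad, lt_of_le_of_ne h0 hne.symm⟩,
    fun z ⟨hz, hpos⟩ => hmin z hpos.le hpos.ne' (mem_ker_bilForm.1 hz)⟩

variable {K : Type} [Field K] {l : Q.I → K} {ι : Type*} {a : ι → Q.I → ℤ}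

lemma IsMinImag.mem_Rplus (hC : Q.Connected) (hδ : Q.IsMinImag δ) (hl : Q.pair K l δ = 0) :
    δ ∈ Q.Rplus K l :=
  have ⟨hker, hpos⟩ := hδ.isLeast.1
  ⟨⟨.fund δ (hC.inFund_of_mem_ker hker hpos), hpos.le, hpos.ne'⟩, hl⟩

lemma exists_bilForm_sum_neg {T S : Finset ι} (hT : ∑ t ∈ T, a t ∈ LinearMap.ker Q.bilForm)
    (hST : S ⊆ T) (hS : 0 < Q.bilForm (∑ t ∈ S, a t) (∑ t ∈ S, a t)) :
    ∃ t ∈ T, t ∉ S ∧ Q.bilForm (∑ t ∈ S, a t) (a t) < 0 := by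
  classical
  by_contra! h
  have hnn := Finset.sum_nonneg fun t (ht : t ∈ T \ S) =>
    h t (Finset.mem_sdiff.1 ht).1 (Finset.mem_sdiff.1 ht).2
  have hzero := bilForm_apply_eq_zero_of_mem_ker hT (∑ t ∈ S, a t)
  rw [← Finset.sum_sdiff hST, map_add, map_sum] at hzero
  linarith

lemma exists_subset_sum_eq (hC : Q.Connected) (hP : Q.PosSemidef) (hδ : Q.IsMinImag δ)
    (hl : Q.pair K l δ = 0) {T : Finset ι} (hne : T.Nonempty)
    (ha : ∀ t ∈ T, a t ∈ Q.SigmaSet K l) (hT : ∑ t ∈ T, a t ∈ LinearMap.ker Q.bilForm) :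
    ∃ S ⊆ T, ∑ t ∈ S, a t = δ := by
  classical
  obtain ⟨hδker, -⟩ := hδ.isLeast.1
  have hδR := hδ.mem_Rplus hC hl
  have hfin : {S | S ⊆ T ∧ ∑ t ∈ S, a t ∈ Q.Rplus K l ∧ ∑ t ∈ S, a t ≤ δ}.Finite :=
    T.powerset.finite_toSet.subset fun S hS => Finset.mem_coe.2 (Finset.mem_powerset.2 hS.1)
  obtain ⟨t₀, ht₀⟩ := hne
  obtain ⟨S, ⟨hST, hSR, hSδ⟩, hmax⟩ := hfin.exists_maximal ⟨{t₀}, by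
    simpa [ht₀, (ha t₀ ht₀).1] using le_of_mem_SigmaSet hC hP hδker hδR (ha t₀ ht₀)⟩
  have hSker : ∑ t ∈ S, a t ∈ LinearMap.ker Q.bilForm := by
    rw [← Q.bilForm.apply_apply_same_eq_zero_iff hP Q.isSymm_bilForm]
    by_contra hself
    obtain ⟨t, ht, htS, hneg⟩ :=
      exists_bilForm_sum_neg hT hST ((hP _).lt_of_ne (Ne.symm hself))
    have hinsert : ∑ u ∈ insert t S, a u = ∑ u ∈ S, a u + a t := by
      rw [Finset.sum_insert htS, add_comm]
    refine htS (hmax ⟨Finset.insert_subset ht hST, ?_, ?_⟩ (Finset.subset_insert t S)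
      (Finset.mem_insert_self t S))
    · rw [hinsert]
      exact add_mem_Rplus_of_bilForm_neg hC hP hSR (ha t ht).1 hneg
    · rw [hinsert]
      exact add_le_of_bilForm_neg hC hP hδker hδR hSR hSδ (ha t ht) hneg
  exact ⟨S, hST, hSδ.antisymm (hδ.isLeast.2 ⟨hSker, ((mem_Rplus_iff hC hP).1 hSR).1.1⟩)⟩

lemma exists_finpartition_sum_eq [DecidableEq ι] (hC : Q.Connected) (hP : Q.PosSemidef)
    (hδ : Q.IsMinImag δ) (hl : Q.pair K l δ = 0) (T : Finset ι)
    (ha : ∀ t ∈ T, a t ∈ Q.SigmaSet K l) (hT : ∑ t ∈ T, a t ∈ LinearMap.ker Q.bilForm) :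
    ∃ P : Finpartition T, ∀ S ∈ P.parts, ∑ t ∈ S, a t = δ := by
  obtain ⟨hδker, hδpos⟩ := hδ.isLeast.1
  induction T using Finset.strongInduction with
  | H T ih =>
  rcases T.eq_empty_or_nonempty with rfl | hne
  · exact ⟨.empty _, by simp⟩
  · obtain ⟨S, hST, hS⟩ := exists_subset_sum_eq hC hP hδ hl hne ha hT
    have hSne : S.Nonempty := by
      rw [Finset.nonempty_iff_ne_empty]
      rintro rfl
      exact hδpos.ne hS
    have hsdiff : ∑ t ∈ T \ S, a t ∈ LinearMap.ker Q.bilForm := by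
      rw [Finset.sum_sdiff_eq_sub hST, hS]
      exact sub_mem hT hδker
    obtain ⟨P, hPδ⟩ := ih _ (Finset.sdiff_ssubset hST hSne)
      (fun t ht => ha t (Finset.sdiff_subset ht)) hsdiff
    refine ⟨P.extend hSne.ne_empty Finset.sdiff_disjoint (Finset.sdiff_union_of_subset hST), ?_⟩
    exact (Finset.forall_mem_insert _ _ _).2 ⟨hS, hPδ⟩

end Decomposition

end FinQuiver

theorem stmt12_general (Q : FinQuiver) (K : Type) [Field K] (l : Q.I → K) (δ : Q.I → ℤ)
    (hQ : Q.IsExtDynkin) (hδ : Q.IsMinImag δ) (hl : Q.pair K l δ = 0) (m : ℕ)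
    {ι : Type*} [Fintype ι] (a : ι → (Q.I → ℤ)) (ha : ∀ t, a t ∈ Q.SigmaSet K l)
    (hsum : ∑ t, a t = m • δ) :
    ∃ P : ι → Fin m, ∀ s : Fin m, ∑ t with P t = s, a t = δ := by
  classical
  obtain ⟨hC, hP, -⟩ := hQ
  obtain ⟨hδker, hδpos⟩ := hδ.isLeast.1
  obtain ⟨P, hPδ⟩ := FinQuiver.exists_finpartition_sum_eq hC hP hδ hl Finset.univ
    (fun t _ => ha t) (hsum ▸ Submodule.smul_of_tower_mem _ m hδker)
  have hcard : P.parts.card • δ = m • δ := by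
    rw [← hsum, ← sum_finpartition_parts P a, Finset.sum_congr rfl hPδ, Finset.sum_const]
  obtain ⟨f, hf⟩ := exists_fiber_mem_parts P ((nsmul_left_strictMono hδpos).injective hcard)
  exact ⟨f, fun s => hPδ _ (hf s)⟩

/-- for an extended Dynkin quiver with minimal positive imaginary
root `δ` and `λ·δ = 0`, every decomposition of `mδ` into elements of `Σ_λ`
refines the decomposition `mδ = δ + ⋯ + δ`. -/
theorem stmt12 (Q : FinQuiver) (K : Type) [Field K] [CharZero K] [IsAlgClosed K]
    (l : Q.I → K) (δ : Q.I → ℤ)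
    (hQ : Q.IsExtDynkin) (hδ : Q.IsMinImag δ) (hl : Q.pair K l δ = 0)
    (m : ℕ) (hm : 1 ≤ m)
    (q : ℕ) (a : Fin q → (Q.I → ℤ)) (ha : ∀ t, a t ∈ Q.SigmaSet K l)
    (hsum : (∑ t, a t) = m • δ) :
    ∃ P : Fin q → Fin m,
      ∀ s : Fin m, (∑ t ∈ Finset.univ.filter (fun t => P t = s), a t) = δ := by
  exact stmt12_general Q K l δ hQ hδ hl m a ha hsum

end
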